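/- Let N ≥ 1, ρ > 0, and let A = (A₁,…,A_N) be an N-tuple of bounded linear operators on a complex Hilbert space X admitting a uniform unitary ρ-dilation (i.e. A ∈ C^u_{ρ,N}). Then A is simultaneously similar to an N-tuple T = (T₁,…,T_N) admitting a uniform unitary 1-dilation: there exist a complex Hilbert space 𝒩, an N-tuple T of bounded operators on 𝒩 belonging to C^u_{1,N}, and a boundedly invertible operator S : X → 𝒩 with A_k = S^{−1} T_k S for all k = 1,…,N. -/

import Mathlib

open ContinuousLinearMap

noncomputable section

/-- A continuous linear operator on a complex Hilbert space is unitary. -/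
def IsUnitaryOp {Y : Type*} [NormedAddCommGroup Y] [InnerProductSpace ℂ Y] [CompleteSpace Y]
    (T : Y →L[ℂ] Y) : Prop :=
  T ∘L adjoint T = 1 ∧ adjoint T ∘L T = 1

/-- A uniform unitary `ρ`-dilation of an `N`-tuple of bounded operators on a complex Hilbert
space `X`: a complex Hilbert space `Y`, a linear isometry `ι : X → Y`, and an `N`-tuple `At`
of operators on `Y` such that every unimodular combination `ζ₁At₁ + ⋯ + ζ_N At_N` is unitary,
and for every nonempty word `i₁,…,iₙ` one has
`A_{i₁}⋯A_{iₙ} = ρ · ι* ∘ (At_{i₁}⋯At_{iₙ}) ∘ ι`. -/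
structure UniformUnitaryRhoDilation (N : ℕ) (ρ : ℝ) (X : Type*) [NormedAddCommGroup X]
    [InnerProductSpace ℂ X] [CompleteSpace X] (A : Fin N → X →L[ℂ] X) where
  Y : Type
  [instN : NormedAddCommGroup Y]
  [instI : InnerProductSpace ℂ Y]
  [instC : CompleteSpace Y]
  ι : X →L[ℂ] Y
  isom : Isometry ι
  At : Fin N → Y →L[ℂ] Y
  unit : ∀ ζ : Fin N → ℂ, (∀ k, ‖ζ k‖ = 1) → IsUnitaryOp (∑ k, ζ k • At k)
  dil : ∀ w : List (Fin N), w ≠ [] →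
    (w.map A).prod = (ρ : ℂ) • (adjoint ι ∘L ((w.map At).prod ∘L ι))

/-- The class `C^u_{ρ,N}`: `N`-tuples admitting a uniform unitary `ρ`-dilation. -/
def MemCu (N : ℕ) (ρ : ℝ) {X : Type*} [NormedAddCommGroup X] [InnerProductSpace ℂ X]
    [CompleteSpace X] (A : Fin N → X →L[ℂ] X) : Prop :=
  Nonempty (UniformUnitaryRhoDilation N ρ X A)

/-- A witness that the `N`-tuple `A` on `X` is simultaneously similar to some `N`-tuple
`T ∈ C^u_{1,N}` of operators on a complex Hilbert space `Nsp`. -/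
structure SimilarToCu1Witness (N : ℕ) (X : Type*) [NormedAddCommGroup X]
    [InnerProductSpace ℂ X] [CompleteSpace X] (A : Fin N → X →L[ℂ] X) where
  Nsp : Type
  [instN : NormedAddCommGroup Nsp]
  [instI : InnerProductSpace ℂ Nsp]
  [instC : CompleteSpace Nsp]
  T : Fin N → Nsp →L[ℂ] Nsp
  memT : MemCu N 1 T
  S : X ≃L[ℂ] Nsp
  sim : ∀ k, A k = (S.symm : Nsp →L[ℂ] X) ∘L (T k ∘L (S : X →L[ℂ] Nsp))

/-- If every word in `V` is intertwined through `Φ` and `J` with the corresponding word in `A`,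
then `A` is similar to a compression of `V` to a semi-invariant subspace. -/
theorem similar_of_intertwine (N : ℕ) {X : Type*} [NormedAddCommGroup X] [InnerProductSpace ℂ X]
    [CompleteSpace X] (A : Fin N → X →L[ℂ] X)
    (H : Type) [NormedAddCommGroup H] [InnerProductSpace ℂ H] [CompleteSpace H]
    (V : Fin N → H →L[ℂ] H)
    (hV : ∀ ζ : Fin N → ℂ, (∀ k, ‖ζ k‖ = 1) → IsUnitaryOp (∑ k, ζ k • V k))
    (Φ : H →L[ℂ] X) (J : X → H)
    (hJ : ∀ (w : List (Fin N)) (x : X), Φ ((w.map V).prod (J x)) = (w.map A).prod x) :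
    Nonempty (SimilarToCu1Witness N X A) := by
  let M : Submodule ℂ H :=
    ⨅ w : List (Fin N), (Φ ∘L (w.map V).prod - (w.map A).prod ∘L Φ).ker
  have memM : ∀ y : H, y ∈ M ↔
      ∀ w : List (Fin N), Φ ((w.map V).prod y) = (w.map A).prod (Φ y) := by
    intro y
    simp [M, Submodule.mem_iInf, sub_eq_zero]
  have hMc : IsClosed (M : Set H) := by
    simp only [M, Submodule.coe_iInf]
    exact isClosed_iInter fun w => ContinuousLinearMap.isClosed_ker _
  have : CompleteSpace M := hMc.completeSpace_coe
  have hΦJ : ∀ x, Φ (J x) = x := fun x => by simpa using hJ [] x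
  have hJM : ∀ x, J x ∈ M := fun x => (memM _).2 fun w => by rw [hJ, hΦJ]
  have hVM : ∀ (w : List (Fin N)) (y : H), y ∈ M → (w.map V).prod y ∈ M := by
    intro w y hy
    rw [memM] at hy ⊢
    intro v
    have h := hy (v ++ w)
    simp only [List.map_append, List.prod_append, mul_apply_eq_comp] at h
    rw [h, hy w]
  let ΦM : M →L[ℂ] X := Φ ∘L M.subtypeL
  have : CompleteSpace ΦM.ker := (ContinuousLinearMap.isClosed_ker ΦM).completeSpace_coe
  let K : Submodule ℂ M := (ΦM.ker)ᗮ
  have : CompleteSpace K := (Submodule.isClosed_orthogonal _).completeSpace_coe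
  let R : K →L[ℂ] X := ΦM ∘L K.subtypeL
  have hinj : R.ker = ⊥ := by
    rw [Submodule.eq_bot_iff]
    intro n hn
    have h1 : (n : M) ∈ ΦM.ker := hn
    have h2 : inner ℂ (n : M) (n : M) = 0 :=
      (Submodule.mem_orthogonal _ _).1 n.2 (n : M) h1
    exact Subtype.ext (inner_self_eq_zero.1 h2)
  have hsurj : R.range = ⊤ := by
    rw [eq_top_iff]
    intro x _
    obtain ⟨y, hy, z, hz, hyz⟩ :=
      Submodule.exists_add_mem_mem_orthogonal (K := ΦM.ker) (⟨J x, hJM x⟩ : M)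
    refine ⟨⟨z, hz⟩, ?_⟩
    have h1 : ΦM (⟨J x, hJM x⟩ : M) = x := hΦJ x
    have h2 : ΦM y = 0 := hy
    rw [hyz, map_add, h2, zero_add] at h1
    exact h1
  let E : K ≃L[ℂ] X := ContinuousLinearEquiv.ofBijective R hinj hsurj
  have hE : ∀ n : K, E n = Φ ((n : M) : H) := fun n => rfl
  let T : Fin N → K →L[ℂ] K := fun k =>
    (E.symm : X →L[ℂ] K) ∘L (A k ∘L (E : K →L[ℂ] X))
  have hT : ∀ (w : List (Fin N)) (n : K), E ((w.map T).prod n) = (w.map A).prod (E n) := by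
    intro w
    induction w with
    | nil => intro n; simp
    | cons k w ih =>
      intro n
      simp only [List.map_cons, List.prod_cons, mul_apply_eq_comp]
      rw [← ih]
      simp [T]
  refine ⟨⟨K, T, ⟨⟨H, M.subtypeL ∘L K.subtypeL, ?_, V, hV, ?_⟩⟩, E.symm, ?_⟩⟩
  · exact isometry_subtype_coe.comp isometry_subtype_coe
  · intro w _
    ext1 n
    refine ext_inner_left ℂ fun n' => ?_
    have hm := hVM w _ (n : M).2
    have hk : (⟨(w.map V).prod ((n : M) : H), hm⟩ : M) - ((w.map T).prod n : K) ∈ ΦM.ker := by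
      have h1 := (memM _).1 (n : M).2 w
      have h2 := hT w n
      rw [hE, hE] at h2
      change ΦM _ = 0
      rw [map_sub, sub_eq_zero]
      exact h1.trans h2.symm
    have h0 := (Submodule.mem_orthogonal' _ _).1 n'.2 _ hk
    rw [inner_sub_right, sub_eq_zero] at h0
    simp only [Complex.ofReal_one, one_smul, ContinuousLinearMap.comp_apply,
      ContinuousLinearMap.adjoint_inner_right]
    exact h0.symm
  · intro k
    ext x
    simp [T]

/-- The operator `f ↦ (i ↦ B (f (e i)))` on `ℓ²(I, Y)`. -/
def permOp {Y : Type} [NormedAddCommGroup Y] [InnerProductSpace ℂ Y] {I : Type}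
    (e : I ≃ I) (B : Y →L[ℂ] Y) :
    lp (fun _ : I => Y) 2 →L[ℂ] lp (fun _ : I => Y) 2 :=
  have hs : ∀ f : lp (fun _ : I => Y) 2, Summable fun i => ‖f i‖ ^ (2 : ℕ) := fun f => by
    simpa using (lp.memℓp f).summable (by norm_num)
  have hs' : ∀ f : lp (fun _ : I => Y) 2,
      Summable fun i => ‖B‖ ^ 2 * ‖f (e i)‖ ^ (2 : ℕ) := fun f =>
    ((e.summable_iff (f := fun i => ‖f i‖ ^ (2 : ℕ))).2 (hs f)).mul_left _
  have hle : ∀ (f : lp (fun _ : I => Y) 2) (i : I),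
      ‖B (f (e i))‖ ^ (2 : ℕ) ≤ ‖B‖ ^ 2 * ‖f (e i)‖ ^ (2 : ℕ) := fun f i => by
    rw [← mul_pow]
    gcongr
    exact B.le_opNorm _
  have hs2 : ∀ f : lp (fun _ : I => Y) 2, Summable fun i => ‖B (f (e i))‖ ^ (2 : ℕ) := fun f =>
    Summable.of_nonneg_of_le (fun i => by positivity) (hle f) (hs' f)
  LinearMap.mkContinuous
    { toFun := fun f => ⟨fun i => B (f (e i)), memℓp_gen (by simpa using hs2 f)⟩
      map_add' := fun f g => by
        ext i
        exact map_add B (f (e i)) (g (e i))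
      map_smul' := fun c f => by
        ext i
        simp }
    ‖B‖ (fun f => by
      refine lp.norm_le_of_tsum_le (by norm_num) (by positivity) ?_
      have h1 : ‖f‖ ^ (2 : ℕ) = ∑' i, ‖f i‖ ^ (2 : ℕ) := by
        simpa using lp.norm_rpow_eq_tsum (p := 2) (by norm_num) f
      have h2 : ∑' i, ‖B (f (e i))‖ ^ (2 : ℕ) ≤ (‖B‖ * ‖f‖) ^ (2 : ℕ) := by
        rw [mul_pow, h1, ← e.tsum_eq (fun i => ‖f i‖ ^ (2 : ℕ)), ← tsum_mul_left]
        exact (hs2 f).tsum_le_tsum (hle f) (hs' f)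
      simpa using h2)

theorem permOp_apply {Y : Type} [NormedAddCommGroup Y] [InnerProductSpace ℂ Y] {I : Type}
    (e : I ≃ I) (B : Y →L[ℂ] Y) (f : lp (fun _ : I => Y) 2) (i : I) :
    permOp e B f i = B (f (e i)) := rfl

theorem permOp_adjoint {Y : Type} [NormedAddCommGroup Y] [InnerProductSpace ℂ Y]
    [CompleteSpace Y] {I : Type} (e : I ≃ I) (B : Y →L[ℂ] Y) :
    adjoint (permOp e B) = permOp e.symm (adjoint B) := by
  symm
  rw [ContinuousLinearMap.eq_adjoint_iff]
  intro f g
  rw [lp.inner_eq_tsum, lp.inner_eq_tsum, ← e.tsum_eq]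
  simp [permOp_apply, ContinuousLinearMap.adjoint_inner_left]

theorem permOp_unitary {Y : Type} [NormedAddCommGroup Y] [InnerProductSpace ℂ Y]
    [CompleteSpace Y] {I : Type} (e : I ≃ I) (B : Y →L[ℂ] Y) (hB : IsUnitaryOp B) :
    IsUnitaryOp (permOp e B) := by
  have h1 : ∀ y, B (adjoint B y) = y := fun y => congrArg (fun F : Y →L[ℂ] Y => F y) hB.1
  have h2 : ∀ y, adjoint B (B y) = y := fun y => congrArg (fun F : Y →L[ℂ] Y => F y) hB.2
  constructor <;> rw [permOp_adjoint] <;> ext f i <;> simp [permOp_apply, h1, h2]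

theorem permOp_word {Y : Type} [NormedAddCommGroup Y] [InnerProductSpace ℂ Y] {I : Type}
    (e : I ≃ I) {N : ℕ} (U : Fin N → Y →L[ℂ] Y) (w : List (Fin N))
    (f : lp (fun _ : I => Y) 2) (i : I) :
    (w.map fun k => permOp e (U k)).prod f i = (w.map U).prod (f (e^[w.length] i)) := by
  induction w generalizing i with
  | nil => simp
  | cons k w ih =>
    simp only [List.map_cons, List.prod_cons, mul_apply_eq_comp, permOp_apply, ih]
    rfl

/-- every `A ∈ C^u_{ρ,N}` is simultaneously similar to some `T ∈ C^u_{1,N}`. -/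
theorem memCu_similar_to_Cu1 (N : ℕ) (hN : 1 ≤ N) (ρ : ℝ) (hρ : 0 < ρ)
    {X : Type*} [NormedAddCommGroup X] [InnerProductSpace ℂ X] [CompleteSpace X]
    (A : Fin N → X →L[ℂ] X) (hA : MemCu N ρ A) :
    Nonempty (SimilarToCu1Witness N X A) := by
  obtain ⟨D⟩ := hA
  obtain ⟨Y, ι, isom, U, unit, dil⟩ := D
  have hadj : ∀ x, adjoint ι (ι x) = x := by
    intro x
    refine ext_inner_left ℂ fun z => ?_
    rw [ContinuousLinearMap.adjoint_inner_right]
    exact (LinearIsometry.mk (ι : X →ₗ[ℂ] Y)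
      (fun x => by simpa using isom.norm_map_of_map_zero (map_zero ι) x)).inner_map_map z x
  let e : Option ℤ ≃ Option ℤ := Equiv.optionCongr (Equiv.addRight 1)
  have e0 : ∀ n : ℕ, e^[n] none = none := fun n => by
    induction n with
    | zero => rfl
    | succ n ih => rw [Function.iterate_succ_apply', ih]; rfl
  have e1 : ∀ n : ℕ, e^[n] (some 0) = some (n : ℤ) := fun n => by
    induction n with
    | zero => rfl
    | succ n ih => rw [Function.iterate_succ_apply', ih]; simp [e]
  let ev : Option ℤ → (lp (fun _ : Option ℤ => Y) 2 →L[ℂ] Y) := fun i =>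
    lp.evalCLM ℂ (fun _ : Option ℤ => Y) 2 i
  have hev : ∀ i f, ev i f = f i := fun i f => rfl
  refine similar_of_intertwine N A (lp (fun _ : Option ℤ => Y) 2) (fun k => permOp e (U k)) ?_
    (adjoint ι ∘L ((ρ : ℂ) • ev none + (1 - (ρ : ℂ)) • ev (some 0)))
    (fun x => lp.single 2 none (ι x) + lp.single 2 (some 0) (ι x)) ?_
  · intro ζ hζ
    have h : ∑ k, ζ k • permOp e (U k) = permOp e (∑ k, ζ k • U k) := by
      ext f i
      rw [← hev i, ← hev i]
      rw [sum_apply, map_sum, hev, permOp_apply, sum_apply]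
      refine Finset.sum_congr rfl fun k _ => ?_
      rfl
    rw [h]
    exact permOp_unitary e _ (unit ζ hζ)
  · intro w x
    simp only [ContinuousLinearMap.comp_apply, add_apply,
      smul_apply, hev, permOp_word, e0, e1]
    by_cases hw : w = []
    · subst hw
      have h : (ρ : ℂ) • x + (1 - (ρ : ℂ)) • x = x := by
        rw [← add_smul]
        simp
      simpa [lp.single_apply, hadj] using h
    · rw [dil w hw]
      simp [lp.single_apply, hw]
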